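/- With A = π((e₁*⊗e₂*)⊗(e₁⊗e₂)), D = π((e₂*⊗e₁*)⊗(e₂⊗e₁)), B = π((e₂*⊗e₁*)⊗(e₁⊗e₂)), and C = π((e₁*⊗e₂*)⊗(e₂⊗e₁)), the following relations hold: B = C and A − D = (q − q⁻¹)·B. (These are the quantum matrix algebra relations bc = cb and ad − da = (q−q⁻¹)bc of O_q(M₂), derived here from the Peter–Weyl/Schur–Weyl projection.) -/

import Mathlib

/- STATEMENT 10: With A = π((e₁*⊗e₂*)⊗(e₁⊗e₂)), D = π((e₂*⊗e₁*)⊗(e₂⊗e₁)),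
   B = π((e₂*⊗e₁*)⊗(e₁⊗e₂)), C = π((e₁*⊗e₂*)⊗(e₂⊗e₁)) (π the projection of M
   onto the span of s*⊗s and t*⊗t killing s*⊗t and t*⊗s, formalized as any
   linear map on the ambient coordinate space satisfying the four defining
   equations), the quantum matrix algebra relations hold:
   B = C  and  A − D = (q − q⁻¹)·B.
   These are the relations bc = cb and ad − da = (q−q⁻¹)bc of O_q(M₂).
   F²⊗F², (F²)*⊗(F²)* and ((F²)*⊗(F²)*)⊗(F²⊗F²) are modeled as coordinate
   vectors as in the context. -/

noncomputable section

variable {F : Type*} [Field F]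

/-- Tensor of two vectors of `F²` (or of two dual vectors), in coordinates. -/
def tens (u v : Fin 2 → F) : Fin 2 × Fin 2 → F := fun p => u p.1 * v p.2

/-- Tensor of an element of `(F²)*⊗(F²)*` with an element of `F²⊗F²`, in
coordinates. -/
def btens (φ u : Fin 2 × Fin 2 → F) : (Fin 2 × Fin 2) × (Fin 2 × Fin 2) → F :=
  fun p => φ p.1 * u p.2

/-- `e₁` (also `e₁*`). -/
def e1 : Fin 2 → F := Pi.single 0 1
/-- `e₂` (also `e₂*`). -/
def e2 : Fin 2 → F := Pi.single 1 1

/-- `s = e₂⊗e₁ + q·e₁⊗e₂`. -/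
def svec (q : F) : Fin 2 × Fin 2 → F := tens e2 e1 + q • tens e1 e2
/-- `t = e₂⊗e₁ − q⁻¹·e₁⊗e₂`. -/
def tvec (q : F) : Fin 2 × Fin 2 → F := tens e2 e1 - q⁻¹ • tens e1 e2
/-- `s* = (q+q⁻¹)⁻¹(q⁻¹·e₂*⊗e₁* + e₁*⊗e₂*)`. -/
def svecStar (q : F) : Fin 2 × Fin 2 → F :=
  (q + q⁻¹)⁻¹ • (q⁻¹ • tens e2 e1 + tens e1 e2)
/-- `t* = (q+q⁻¹)⁻¹(q·e₂*⊗e₁* − e₁*⊗e₂*)`. -/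
def tvecStar (q : F) : Fin 2 × Fin 2 → F :=
  (q + q⁻¹)⁻¹ • (q • tens e2 e1 - tens e1 e2)

/-- The subspace `M` spanned by `s*⊗s, s*⊗t, t*⊗s, t*⊗t`. -/
def Msub (q : F) : Submodule F ((Fin 2 × Fin 2) × (Fin 2 × Fin 2) → F) :=
  Submodule.span F
    {btens (svecStar q) (svec q), btens (svecStar q) (tvec q),
      btens (tvecStar q) (svec q), btens (tvecStar q) (tvec q)}

/-!
In terms of `s*` and `t*`, the dual tensors are `e₂*⊗e₁* = s* + t*` and
`e₁*⊗e₂* = q s* - q⁻¹ t*`. Substituting these and collecting the right-hand factors of `s*` and `t*`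
gives, before applying `π`,
`B - C = s*⊗(-q t) + t*⊗(q⁻¹ s)` and `A - D - (q - q⁻¹) B = -(s*⊗t) - t*⊗s`:
only the mixed tensors killed by `π` remain.
-/

section Bilinearity

variable (φ ψ u v : Fin 2 × Fin 2 → F) (c : F)

lemma btens_add_left : btens (φ + ψ) u = btens φ u + btens ψ u :=
  funext fun _ => add_mul _ _ _

lemma btens_sub_left : btens (φ - ψ) u = btens φ u - btens ψ u :=
  funext fun _ => sub_mul _ _ _

lemma btens_smul_left : btens (c • φ) u = c • btens φ u :=
  funext fun _ => mul_assoc _ _ _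

lemma btens_add_right : btens φ (u + v) = btens φ u + btens φ v :=
  funext fun _ => mul_add _ _ _

lemma btens_sub_right : btens φ (u - v) = btens φ u - btens φ v :=
  funext fun _ => mul_sub _ _ _

lemma btens_smul_right : btens φ (c • u) = c • btens φ u :=
  funext fun _ => mul_left_comm _ _ _

end Bilinearity

section ChangeOfBasis

variable {q : F}

lemma add_inv_ne_zero_of_sq_ne_neg_one (hq : q ≠ 0) (hq2 : q ^ 2 ≠ -1) : q + q⁻¹ ≠ 0 := by
  intro h
  apply hq2
  calc q ^ 2 = q * (q + q⁻¹) - q * q⁻¹ := by ring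
    _ = -1 := by rw [h, mul_inv_cancel₀ hq, mul_zero, zero_sub]

lemma svecStar_add_tvecStar (h : q + q⁻¹ ≠ 0) : svecStar q + tvecStar q = tens e2 e1 :=
  calc svecStar q + tvecStar q = (q + q⁻¹)⁻¹ • (q + q⁻¹) • tens e2 e1 := by
        unfold svecStar tvecStar; module
    _ = tens e2 e1 := inv_smul_smul₀ h _

lemma smul_svecStar_sub_inv_smul_tvecStar (h : q + q⁻¹ ≠ 0) :
    q • svecStar q - q⁻¹ • tvecStar q = tens e1 e2 :=
  calc q • svecStar q - q⁻¹ • tvecStar q = (q + q⁻¹)⁻¹ • (q + q⁻¹) • tens e1 e2 := by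
        unfold svecStar tvecStar; module
    _ = tens e1 e2 := inv_smul_smul₀ h _

lemma neg_smul_tvec (hq : q ≠ 0) : -q • tvec q = tens e1 e2 - q • tens e2 e1 := by
  rw [tvec, smul_sub, neg_smul, neg_smul, smul_inv_smul₀ hq]
  abel

lemma inv_smul_svec (hq : q ≠ 0) : q⁻¹ • svec q = tens e1 e2 + q⁻¹ • tens e2 e1 := by
  rw [svec, smul_add, inv_smul_smul₀ hq, add_comm]

end ChangeOfBasis

section MixedTensors

variable {q : F}

lemma btens_antidiag_sub_eq_mixed (hq : q ≠ 0) (hq2 : q ^ 2 ≠ -1) :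
    btens (tens e2 e1) (tens e1 e2) - btens (tens e1 e2) (tens e2 e1)
      = -q • btens (svecStar q) (tvec q) + q⁻¹ • btens (tvecStar q) (svec q) := by
  have h := add_inv_ne_zero_of_sq_ne_neg_one hq hq2
  calc btens (tens e2 e1) (tens e1 e2) - btens (tens e1 e2) (tens e2 e1)
      = btens (svecStar q + tvecStar q) (tens e1 e2)
          - btens (q • svecStar q - q⁻¹ • tvecStar q) (tens e2 e1) := by
        rw [svecStar_add_tvecStar h, smul_svecStar_sub_inv_smul_tvecStar h]
    _ = btens (svecStar q) (tens e1 e2 - q • tens e2 e1)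
          + btens (tvecStar q) (tens e1 e2 + q⁻¹ • tens e2 e1) := by
        simp only [btens_add_left, btens_sub_left, btens_smul_left, btens_add_right,
          btens_sub_right, btens_smul_right]
        abel
    _ = -q • btens (svecStar q) (tvec q) + q⁻¹ • btens (tvecStar q) (svec q) := by
        rw [← neg_smul_tvec hq, ← inv_smul_svec hq, btens_smul_right, btens_smul_right]

lemma btens_diag_sub_eq_mixed (hq : q ≠ 0) (hq2 : q ^ 2 ≠ -1) :
    btens (tens e1 e2) (tens e1 e2) - btens (tens e2 e1) (tens e2 e1)
        - (q - q⁻¹) • btens (tens e2 e1) (tens e1 e2)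
      = -btens (svecStar q) (tvec q) - btens (tvecStar q) (svec q) := by
  have h := add_inv_ne_zero_of_sq_ne_neg_one hq hq2
  calc btens (tens e1 e2) (tens e1 e2) - btens (tens e2 e1) (tens e2 e1)
        - (q - q⁻¹) • btens (tens e2 e1) (tens e1 e2)
      = btens (q • svecStar q - q⁻¹ • tvecStar q) (tens e1 e2)
          - btens (svecStar q + tvecStar q) (tens e2 e1)
          - (q - q⁻¹) • btens (svecStar q + tvecStar q) (tens e1 e2) := by
        rw [svecStar_add_tvecStar h, smul_svecStar_sub_inv_smul_tvecStar h]
    _ = -btens (svecStar q) (tens e2 e1 - q⁻¹ • tens e1 e2)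
          - btens (tvecStar q) (tens e2 e1 + q • tens e1 e2) := by
        simp only [btens_add_left, btens_sub_left, btens_smul_left, btens_add_right,
          btens_sub_right, btens_smul_right]
        module
    _ = -btens (svecStar q) (tvec q) - btens (tvecStar q) (svec q) := by rw [tvec, svec]

end MixedTensors

theorem stmt10_general {W : Type*} [AddCommGroup W] [Module F W] {q : F} (hq : q ≠ 0)
    (hq2 : q ^ 2 ≠ -1) (π : ((Fin 2 × Fin 2) × (Fin 2 × Fin 2) → F) →ₗ[F] W)
    (hst : π (btens (svecStar q) (tvec q)) = 0)
    (hts : π (btens (tvecStar q) (svec q)) = 0) :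
    π (btens (tens e2 e1) (tens e1 e2)) = π (btens (tens e1 e2) (tens e2 e1))
    ∧ π (btens (tens e1 e2) (tens e1 e2)) - π (btens (tens e2 e1) (tens e2 e1))
        = (q - q⁻¹) • π (btens (tens e2 e1) (tens e1 e2)) := by
  constructor
  · rw [← sub_eq_zero, ← map_sub, btens_antidiag_sub_eq_mixed hq hq2]
    simp [hst, hts]
  · rw [← sub_eq_zero, ← map_smul, ← map_sub, ← map_sub, btens_diag_sub_eq_mixed hq hq2]
    simp [hst, hts]

theorem stmt10 (q : F) (hq : q ≠ 0) (hq2 : q ^ 2 ≠ -1)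
    (π : ((Fin 2 × Fin 2) × (Fin 2 × Fin 2) → F) →ₗ[F]
      ((Fin 2 × Fin 2) × (Fin 2 × Fin 2) → F))
    (hss : π (btens (svecStar q) (svec q)) = btens (svecStar q) (svec q))
    (htt : π (btens (tvecStar q) (tvec q)) = btens (tvecStar q) (tvec q))
    (hst : π (btens (svecStar q) (tvec q)) = 0)
    (hts : π (btens (tvecStar q) (svec q)) = 0) :
    -- B = C :
    π (btens (tens e2 e1) (tens e1 e2)) = π (btens (tens e1 e2) (tens e2 e1))
    -- A − D = (q − q⁻¹)·B :
    ∧ π (btens (tens e1 e2) (tens e1 e2)) - π (btens (tens e2 e1) (tens e2 e1))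
        = (q - q⁻¹) • π (btens (tens e2 e1) (tens e1 e2)) :=
  stmt10_general hq hq2 π hst hts

end
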